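/- Let N ≥ 3, let V satisfy condition (V) and the decay condition that there exist A, α > 0 with V⁺(x) ≤ A|x|^{-2-α} for all x ∈ ℝ^N, let f satisfy conditions (f1), (f2), (f3), let λ > 0, and let u be a solution of problem (P_λ). Then the integrals ∫_{ℝ^N} |∇u|² dx and ∫_{ℝ^N} V(x)u² dx are finite and satisfy the strict inequality ∫_{ℝ^N} |∇u|² dx < λ ∫_{ℝ^N} V(x)u² dx. -/

import Mathlib

open MeasureTheory Filter Metric Set
open scoped ENNReal NNReal Topology

noncomputable section

/-- Euclidean space `ℝ^N`. -/
abbrev Euc (N : ℕ) := EuclideanSpace ℝ (Fin N)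

/-- The Laplace operator on `ℝ^N`: the sum of the second partial derivatives. -/
def lap (N : ℕ) (u : Euc N → ℝ) (x : Euc N) : ℝ :=
  ∑ i : Fin N,
    fderiv ℝ (fun y => fderiv ℝ u y (EuclideanSpace.single i 1)) x (EuclideanSpace.single i 1)

/-- The principal eigenvalue `λ₁(R)`: the infimum of `∫_{B_R} |∇u|²` over smooth functions
compactly supported in the open ball `B_R` with `∫_{B_R} V u² = 1`. -/
def lam1 (N : ℕ) (V : Euc N → ℝ) (R : ℝ) : ℝ :=
  sInf { t : ℝ | ∃ u : Euc N → ℝ, ContDiff ℝ (⊤ : ℕ∞) u ∧ HasCompactSupport u ∧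
    tsupport u ⊆ ball (0 : Euc N) R ∧
    (∫ x, V x * u x ^ 2) = 1 ∧ t = ∫ x, ‖gradient u x‖ ^ 2 }

/-- `Λ := lim_{R → ∞} λ₁(R)`. -/
def Lam (N : ℕ) (V : Euc N → ℝ) : ℝ := limUnder atTop (lam1 N V)

/-- Condition (V): `V` is a bounded Hölder-continuous function whose positive part
`V⁺ = max(V, 0)` is nontrivial and decomposes as `V₁ + V₂` with `V₁ ∈ L^{N/2}` and
`|x|² V₂(x) → 0` as `|x| → ∞`. -/
def CondV (N : ℕ) (V V₁ V₂ : Euc N → ℝ) : Prop :=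
  (∃ C β : ℝ≥0, 0 < β ∧ β ≤ 1 ∧ HolderWith C β V) ∧
  (∃ C : ℝ, ∀ x, |V x| ≤ C) ∧
  (∃ x, 0 < V x) ∧
  (∀ x, max (V x) 0 = V₁ x + V₂ x) ∧
  MemLp V₁ ((N : ℝ≥0∞) / 2) volume ∧
  Tendsto (fun x : Euc N => ‖x‖ ^ 2 * V₂ x) (cocompact _) (𝓝 0)

/-- The decay condition: `V⁺(x) ≤ A |x|^{-2-α}`. -/
def CondVDecay (N : ℕ) (V : Euc N → ℝ) : Prop :=
  ∃ A α : ℝ, 0 < A ∧ 0 < α ∧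
    ∀ x : Euc N, x ≠ 0 → max (V x) 0 ≤ A * ‖x‖ ^ (-2 - α)

/-- Conditions (f1), (f2), (f3) on the absorption term `f`. -/
def CondF (N : ℕ) (V : Euc N → ℝ) (f : ℝ → ℝ) : Prop :=
  ContDiff ℝ 1 f ∧ (∀ u : ℝ, 0 ≤ u → 0 ≤ f u) ∧
  -- (f1)
  f 0 = 0 ∧ deriv f 0 = 0 ∧
  0 < Filter.liminf (fun u : ℝ => ((deriv f u / u : ℝ) : EReal)) (𝓝[>] (0 : ℝ)) ∧
  -- (f2)
  StrictMonoOn (fun u : ℝ => f u / u) (Ioi 0) ∧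
  -- (f3)
  (∃ L : EReal, Tendsto (fun u : ℝ => ((f u / u : ℝ) : EReal)) atTop (𝓝 L) ∧
    ((⨆ x, |V x| : ℝ) : EReal) < L)

/-- A solution of problem `(P_λ)`: a positive `C²` function solving the logistic equation
and decaying to zero at infinity. -/
structure IsSolution (N : ℕ) (V : Euc N → ℝ) (f : ℝ → ℝ) (lam : ℝ) (u : Euc N → ℝ) : Prop where
  smooth : ContDiff ℝ 2 u
  pos : ∀ x, 0 < u x
  eqn : ∀ x, -lap N u x = lam * (V x * u x - f (u x))
  decay : Tendsto u (cocompact (Euc N)) (𝓝 0)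

/-- The surface integral `∫_{∂B_R} g dσ` over the sphere of radius `R`, written in polar
coordinates with respect to the canonical surface measure on the unit sphere. -/
def sphereInt (N : ℕ) (g : Euc N → ℝ) (R : ℝ) : ℝ :=
  ∫ ω : sphere (0 : Euc N) 1, g (R • (ω : Euc N)) * R ^ (N - 1)
    ∂((volume : Measure (Euc N)).toSphere)


/-- partial derivative abbreviation -/
def pd (N : ℕ) (u : Euc N → ℝ) (i : Fin N) (x : Euc N) : ℝ :=
  fderiv ℝ u x (EuclideanSpace.single i 1)

lemma lap_eq (N : ℕ) (u : Euc N → ℝ) (x : Euc N) : lap N u x = ∑ i, pd N (pd N u i) i x := rfl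

lemma contDiff_pd {N : ℕ} {u : Euc N → ℝ} {n m : WithTop ℕ∞} (hu : ContDiff ℝ n u) (h : m + 1 ≤ n)
    (i : Fin N) : ContDiff ℝ m (pd N u i) :=
  (hu.fderiv_right h).clm_apply contDiff_const

lemma continuous_lap {N : ℕ} {u : Euc N → ℝ} (hu : ContDiff ℝ 2 u) : Continuous (lap N u) := by
  have : lap N u = fun x => ∑ i, pd N (pd N u i) i x := rfl
  rw [this]
  refine continuous_finsetSum _ fun i _ => ?_
  exact (contDiff_pd (m := 0) (contDiff_pd (m := 1) hu (by norm_num) i) (by norm_num) i).continuous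

lemma hcs_pd {N : ℕ} {u : Euc N → ℝ} (hu : HasCompactSupport u) (i : Fin N) :
    HasCompactSupport (pd N u i) := hu.fderiv_apply ℝ _

lemma ibp {N : ℕ} {u φ : Euc N → ℝ} (hu : ContDiff ℝ 1 u) (hφ : ContDiff ℝ 1 φ)
    (hc : HasCompactSupport φ) (i : Fin N) :
    ∫ x, pd N u i x * φ x = - ∫ x, u x * pd N φ i x := by
  have h1 : Continuous (pd N u i) := (contDiff_pd (m := 0) hu (by norm_num) i).continuous
  have h2 : Continuous (pd N φ i) := (contDiff_pd (m := 0) hφ (by norm_num) i).continuous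
  have := integral_mul_fderiv_eq_neg_fderiv_mul_of_integrable (μ := (volume : Measure (Euc N)))
    (f := u) (g := φ) (v := EuclideanSpace.single i (1:ℝ))
    ((h1.mul hφ.continuous).integrable_of_hasCompactSupport hc.mul_left)
    ((hu.continuous.mul h2).integrable_of_hasCompactSupport (hcs_pd hc i).mul_left)
    ((hu.continuous.mul hφ.continuous).integrable_of_hasCompactSupport hc.mul_left)
    (fun x _ => hu.differentiable (by norm_num) x) (fun x _ => hφ.differentiable (by norm_num) x)
  simp only [pd]
  linarith

lemma green {N : ℕ} {u φ : Euc N → ℝ} (hu : ContDiff ℝ 2 u) (hφ : ContDiff ℝ 2 φ)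
    (hc : HasCompactSupport φ) :
    ∫ x, lap N u x * φ x = ∫ x, u x * lap N φ x := by
  have a1 := fun i => contDiff_pd (m := 1) hu (by norm_num) i
  have b1 := fun i => contDiff_pd (m := 1) hφ (by norm_num) i
  have a2 := fun i => (contDiff_pd (m := 0) (a1 i) (by norm_num) i).continuous
  have b2 := fun i => (contDiff_pd (m := 0) (b1 i) (by norm_num) i).continuous
  simp only [lap_eq, Finset.sum_mul, Finset.mul_sum]
  rw [integral_finsetSum, integral_finsetSum]
  · refine Finset.sum_congr rfl fun i _ => ?_
    rw [ibp (a1 i) (hφ.of_le (by norm_num)) hc i, ibp (hu.of_le (by norm_num)) (b1 i) (hcs_pd hc i) i]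
    simp
  · intro i _
    exact (hu.continuous.mul (b2 i)).integrable_of_hasCompactSupport (hcs_pd (hcs_pd hc i) i).mul_left
  · intro i _
    exact ((a2 i).mul hφ.continuous).integrable_of_hasCompactSupport hc.mul_left

lemma norm_grad {N : ℕ} (u : Euc N → ℝ) (x : Euc N) :
    ‖gradient u x‖ ^ 2 = ∑ i, pd N u i x ^ 2 := by
  rw [EuclideanSpace.norm_sq_eq]
  refine Finset.sum_congr rfl fun i _ => ?_
  have : gradient u x i = pd N u i x := by
    have h : inner ℝ (gradient u x) (EuclideanSpace.single i 1) = pd N u i x := by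
      simp [gradient, pd]
    rw [← h, EuclideanSpace.inner_single_right]; simp
  rw [this]; simp

lemma lap_sq {N : ℕ} {u : Euc N → ℝ} (hu : ContDiff ℝ 2 u) (x : Euc N) :
    lap N (fun y => u y ^ 2) x = 2 * (‖gradient u x‖ ^ 2 + u x * lap N u x) := by
  have hd : Differentiable ℝ u := hu.differentiable (by norm_num)
  have a1 := fun i => contDiff_pd (m := 1) hu (by norm_num) i
  have hp : ∀ i, pd N (fun y => u y ^ 2) i = fun y => 2 * (u y * pd N u i y) := by
    intro i; ext y
    simp only [pd]
    have := ((hd y).hasFDerivAt.pow 2).fderiv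
    rw [this]; simp; ring
  rw [norm_grad, lap_eq, lap_eq, Finset.mul_sum, ← Finset.sum_add_distrib, Finset.mul_sum]
  refine Finset.sum_congr rfl fun i _ => ?_
  rw [hp i]
  have h := (((hd x).hasFDerivAt.mul ((a1 i).differentiable (by norm_num) x).hasFDerivAt).const_mul 2).fderiv
  change fderiv ℝ (fun y => 2 * (u y * pd N u i y)) x _ = _
  erw [h]
  simp [pd]; ring

lemma lap_smul {N : ℕ} {φ : Euc N → ℝ} (hφ : ContDiff ℝ 2 φ) (c : ℝ) (x : Euc N) :
    lap N (fun y => φ (c • y)) x = c ^ 2 * lap N φ (c • x) := by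
  have h : ∀ (g : Euc N → ℝ) i, pd N (fun y => g (c • y)) i = fun y => c * pd N g i (c • y) := by
    intro g i; ext y
    simp only [pd]
    rw [fderiv_comp_smul]; simp
  rw [lap_eq, lap_eq, Finset.mul_sum]
  refine Finset.sum_congr rfl fun i _ => ?_
  rw [h φ i]
  have h3 : pd N (fun y => c * pd N φ i (c • y)) i x = c * pd N (fun y => pd N φ i (c • y)) i x := by
    simp only [pd]
    have hd : DifferentiableAt ℝ (fun y => pd N φ i (c • y)) x :=
      (((contDiff_pd (m := 1) hφ (by norm_num) i).comp
        (contDiff_const_smul c)).differentiable (by norm_num)) x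
    have := (hd.hasFDerivAt.const_mul c).fderiv
    simp only [pd] at this
    rw [this]
    simp
  rw [h3, h (pd N φ i) i]; ring

lemma pd_pow {N : ℕ} (s : ℝ) (i : Fin N) {y : Euc N} (hy : y ≠ 0) :
    pd N (fun x => (‖x‖ ^ 2) ^ s) i y = 2 * s * (y i * (‖y‖ ^ 2) ^ (s - 1)) := by
  have hy2 : ‖y‖ ^ 2 ≠ 0 := by simpa using hy
  have h := ((hasStrictFDerivAt_norm_sq y).hasFDerivAt.rpow_const (p := s) (Or.inl hy2)).fderiv
  simp only [pd]
  rw [h]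
  simp [EuclideanSpace.inner_single_right]
  ring

lemma contDiffAt_pow {N : ℕ} (s : ℝ) {y : Euc N} (hy : y ≠ 0) :
    ContDiffAt ℝ 2 (fun x : Euc N => (‖x‖ ^ 2) ^ s) y := by
  have hy2 : ‖y‖ ^ 2 ≠ 0 := by simpa using hy
  exact (contDiff_norm_sq ℝ).contDiffAt.rpow_const_of_ne hy2

lemma lap_pow {N : ℕ} (s : ℝ) {y : Euc N} (hy : y ≠ 0) :
    lap N (fun x => (‖x‖ ^ 2) ^ s) y = 2 * s * (N + 2 * s - 2) * (‖y‖ ^ 2) ^ (s - 1) := by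
  have hy2 : ‖y‖ ^ 2 ≠ 0 := by simpa using hy
  have hpos : 0 < ‖y‖ ^ 2 := by positivity
  have key : ∀ i, pd N (pd N (fun x => (‖x‖ ^ 2) ^ s) i) i y
      = 2 * s * (‖y‖ ^ 2) ^ (s - 1) + 2 * s * (2 * (s - 1)) * (‖y‖ ^ 2) ^ (s - 1 - 1) * (y i) ^ 2 := by
    intro i
    have he : pd N (fun x => (‖x‖ ^ 2) ^ s) i =ᶠ[𝓝 y]
        fun y => 2 * s * (y i * (‖y‖ ^ 2) ^ (s - 1)) := by
      filter_upwards [isOpen_ne.mem_nhds hy] with z hz using pd_pow s i hz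
    have h1 : HasFDerivAt (fun y : Euc N => y i) (EuclideanSpace.proj (𝕜 := ℝ) i) y :=
      (EuclideanSpace.proj (𝕜 := ℝ) i).hasFDerivAt
    have h2 := ((contDiffAt_pow (s - 1) hy).differentiableAt (by norm_num)).hasFDerivAt
    have h3 := ((h1.mul h2).const_mul (2 * s)).fderiv
    have h4 := pd_pow (s - 1) i hy
    simp only [pd] at h4
    change fderiv ℝ (pd N (fun x => (‖x‖ ^ 2) ^ s) i) y _ = _
    rw [he.fderiv_eq]
    erw [h3]
    simp [h4]
    ring
  rw [lap_eq, Finset.sum_congr rfl (fun i _ => key i), Finset.sum_add_distrib, ← Finset.mul_sum,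
    ← Finset.mul_sum]
  have hn : ∑ i, y i ^ 2 = ‖y‖ ^ 2 := by
    rw [EuclideanSpace.norm_sq_eq]; simp
  rw [hn, Real.rpow_sub_one hy2 (s - 1)]
  simp
  field_simp
  ring

lemma pd_pd_nonpos_of_max {N : ℕ} {h : Euc N → ℝ} {x : Euc N} (hh : ContDiffAt ℝ 2 h x)
    (hm : IsLocalMax h x) (i : Fin N) : pd N (pd N h i) i x ≤ 0 := by
  by_contra hcon
  push Not at hcon
  set e : Euc N := EuclideanSpace.single i 1 with he
  let g : ℝ → ℝ := fun t => h (x + t • e)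
  have hl : ∀ t : ℝ, HasDerivAt (fun t : ℝ => x + t • e) e t := by
    intro t
    simpa using ((hasDerivAt_id t).smul_const e).const_add x
  have hc0 : Tendsto (fun t : ℝ => x + t • e) (𝓝 0) (𝓝 x) := by
    have := (hl 0).continuousAt.tendsto
    simpa using this
  have hev : ∀ᶠ y in 𝓝 x, DifferentiableAt ℝ h y := by
    have := (hh.eventually (by simp))
    filter_upwards [this] with y hy using hy.differentiableAt (by norm_num)
  have hg1 : deriv g =ᶠ[𝓝 0] fun t => pd N h i (x + t • e) := by
    filter_upwards [hc0.eventually hev] with t ht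
    exact (ht.hasFDerivAt.comp_hasDerivAt t (hl t)).deriv
  have hd : DifferentiableAt ℝ (pd N h i) x := by
    have : ContDiffAt ℝ 1 (fderiv ℝ h) x := hh.fderiv_right (by norm_num)
    exact (this.differentiableAt (by norm_num)).clm_apply (differentiableAt_const _)
  have hg2 : deriv (deriv g) 0 = pd N (pd N h i) i x := by
    rw [hg1.deriv_eq]
    have hd' : DifferentiableAt ℝ (pd N h i) (x + (0:ℝ) • e) := by simpa using hd
    have := (hd'.hasFDerivAt.comp_hasDerivAt 0 (hl 0)).deriv
    simp only [zero_smul, add_zero] at this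
    exact this
  have hgm : IsLocalMax g 0 := by
    have := hc0.eventually hm
    filter_upwards [this] with t ht
    simpa [g] using ht
  have hgc : ContinuousAt g 0 := by
    have h1 : ContinuousAt h (x + (0:ℝ) • e) := by simpa using hh.continuousAt
    exact h1.comp (f := fun t : ℝ => x + t • e) (hl 0).continuousAt
  have hmin := isLocalMin_of_deriv_deriv_pos (f := g) (x₀ := 0) (by rw [hg2]; exact hcon)
    hgm.deriv_eq_zero hgc
  have hconst : g =ᶠ[𝓝 0] fun _ => g 0 := by
    filter_upwards [hgm, hmin] with t h1 h2 using le_antisymm h1 h2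
  have h1 : deriv (deriv g) 0 = 0 := by
    rw [hconst.deriv.deriv_eq]; simp
  rw [← hg2, h1] at hcon
  exact lt_irrefl _ hcon

lemma lap_sub_const_mul {N : ℕ} {u w : Euc N → ℝ} {x : Euc N} (hu : ContDiffAt ℝ 2 u x)
    (hw : ContDiffAt ℝ 2 w x) (a : ℝ) :
    lap N (fun y => u y + a * w y) x = lap N u x + a * lap N w x := by
  rw [lap_eq, lap_eq, lap_eq, Finset.mul_sum, ← Finset.sum_add_distrib]
  refine Finset.sum_congr rfl fun i _ => ?_
  have hev : ∀ {h : Euc N → ℝ}, ContDiffAt ℝ 2 h x → ∀ᶠ y in 𝓝 x, DifferentiableAt ℝ h y := by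
    intro h hh
    have := (hh.eventually (by simp))
    filter_upwards [this] with y hy using hy.differentiableAt (by norm_num)
  have hd : ∀ {h : Euc N → ℝ}, ContDiffAt ℝ 2 h x → DifferentiableAt ℝ (pd N h i) x := by
    intro h hh
    have : ContDiffAt ℝ 1 (fderiv ℝ h) x := hh.fderiv_right (by norm_num)
    exact (this.differentiableAt (by norm_num)).clm_apply (differentiableAt_const _)
  have h0 : ∀ {u w : Euc N → ℝ} {y : Euc N}, DifferentiableAt ℝ u y → DifferentiableAt ℝ w y →
      pd N (fun y => u y + a * w y) i y = pd N u i y + a * pd N w i y := by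
    intro u w y h1 h2
    simp only [pd]
    have := (h1.hasFDerivAt.add (h2.hasFDerivAt.const_mul a)).fderiv
    erw [this]; simp
  have h1 : pd N (fun y => u y + a * w y) i =ᶠ[𝓝 x] fun y => pd N u i y + a * pd N w i y := by
    filter_upwards [hev hu, hev hw] with y h1 h2 using h0 h1 h2
  rw [← h0 (hd hu) (hd hw)]
  simp only [pd]
  have := h1.fderiv_eq (𝕜 := ℝ)
  simp only [pd] at this
  rw [this]

lemma lap_nonpos_of_max {N : ℕ} {h : Euc N → ℝ} {x : Euc N} (hh : ContDiffAt ℝ 2 h x)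
    (hm : IsLocalMax h x) : lap N h x ≤ 0 := by
  rw [lap_eq]
  exact Finset.sum_nonpos fun i _ => pd_pd_nonpos_of_max hh hm i

lemma compare {N : ℕ} {u W c : Euc N → ℝ} {R : ℝ} (hR : 0 < R) (hu : ContDiff ℝ 2 u)
    (hW : ∀ x : Euc N, x ≠ 0 → ContDiffAt ℝ 2 W x) (hWp : ∀ x, 0 < W x)
    (h1 : ∀ x, R ≤ ‖x‖ → -lap N u x ≤ c x * u x)
    (h2 : ∀ x, R ≤ ‖x‖ → c x * W x < -lap N W x)
    (hs : ∀ x, ‖x‖ = R → u x ≤ W x)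
    (ht : Tendsto (fun x => u x / W x) (cocompact (Euc N)) (𝓝 0)) :
    ∀ x, R ≤ ‖x‖ → u x ≤ W x := by
  intro x0 hx0
  by_contra hcon
  push Not at hcon
  have hne : ∀ x : Euc N, R ≤ ‖x‖ → x ≠ 0 := by
    intro x hx h0
    rw [h0, norm_zero] at hx; linarith
  have hq0 : 1 < u x0 / W x0 := by rwa [one_lt_div (hWp x0)]
  have hcont : ContinuousOn (fun x => u x / W x) {x : Euc N | R ≤ ‖x‖} := by
    intro x hx
    exact (hu.continuous.continuousAt.div (hW x (hne x hx)).continuousAt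
      (hWp x).ne').continuousWithinAt
  obtain ⟨x1, hx1, hmax⟩ := hcont.exists_isMaxOn' (isClosed_le continuous_const continuous_norm)
    (x₀ := x0) hx0 (by
      refine Filter.Eventually.filter_mono inf_le_left ?_
      filter_upwards [ht.eventually (gt_mem_nhds (zero_lt_one.trans hq0))] with x hx using hx.le)
  set t := u x1 / W x1 with htdef
  have ht1 : 1 < t := hq0.trans_le (hmax hx0)
  have hut : u x1 = t * W x1 := by rw [htdef, div_mul_cancel₀ _ (hWp x1).ne']
  have hx1' : R < ‖x1‖ := by
    refine lt_of_le_of_ne hx1 fun h => ?_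
    have := hs x1 h.symm
    have h3 := hWp x1
    nlinarith
  have hlm : IsLocalMax (fun y => u y + (-t) * W y) x1 := by
    have : {x : Euc N | R < ‖x‖} ∈ 𝓝 x1 := (isOpen_lt continuous_const continuous_norm).mem_nhds hx1'
    filter_upwards [this] with y hy
    have h3 : u y / W y ≤ t := hmax (le_of_lt hy)
    rw [div_le_iff₀ (hWp y)] at h3
    rw [hut]; linarith
  have hWx := hW x1 (hne x1 hx1)
  have h4 := lap_nonpos_of_max (hu.contDiffAt.add (contDiffAt_const.mul hWx)) hlm
  rw [lap_sub_const_mul hu.contDiffAt hWx] at h4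
  have h5 := h1 x1 hx1
  have h6 := mul_lt_mul_of_pos_left (h2 x1 hx1) (zero_lt_one.trans ht1)
  rw [hut] at h5
  linarith

lemma decay_bound {N : ℕ} (hN : 3 ≤ N) {u : Euc N → ℝ} (hu : ContDiff ℝ 2 u) (hpos : ∀ x, 0 < u x)
    (hdec : Tendsto u (cocompact (Euc N)) (𝓝 0)) {B a s : ℝ} (hB : 0 < B) (ha : 0 < a)
    (hs0 : s < 0) (hs1 : 0 < (N : ℝ) + 2 * s - 2)
    (h : ∀ x : Euc N, x ≠ 0 → -lap N u x ≤ B * (‖x‖ ^ 2) ^ (-1 - a) * u x) :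
    ∃ R C : ℝ, 1 ≤ R ∧ 0 ≤ C ∧ ∀ x : Euc N, R ≤ ‖x‖ → u x ≤ C * (‖x‖ ^ 2) ^ s := by
  have hN' : (3 : ℝ) ≤ N := by exact_mod_cast hN
  obtain ⟨s2, hs2, hs2a, hs2b⟩ : ∃ s2 : ℝ, s2 < 0 ∧ 0 < a + s2 ∧ 0 < (N : ℝ) + 2 * s2 - 2 := by
    refine ⟨-(min a (1/2) / 2), ?_, ?_, ?_⟩
    · have : 0 < min a (1/2 : ℝ) := lt_min ha (by norm_num)
      linarith
    · have := min_le_left a (1/2 : ℝ); linarith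
    · have := min_le_right a (1/2 : ℝ); linarith
  set κ1 := -(2 * s * (N + 2 * s - 2)) with hκ1
  set κ2 := -(2 * s2 * (N + 2 * s2 - 2)) with hκ2
  have hk1 : 0 < κ1 := by nlinarith
  have hk2 : 0 < κ2 := by nlinarith
  have e1 : ∀ᶠ ρ : ℝ in atTop, B * ρ ^ (-a) < κ1 := by
    have := (tendsto_rpow_neg_atTop ha).const_mul B
    rw [mul_zero] at this
    exact this.eventually (gt_mem_nhds hk1)
  have e2 : ∀ᶠ ρ : ℝ in atTop, 2 * B * ρ ^ (-(a + s2)) < κ2 := by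
    have := (tendsto_rpow_neg_atTop hs2a).const_mul (2 * B)
    rw [mul_zero] at this
    exact this.eventually (gt_mem_nhds hk2)
  obtain ⟨ρ0, hρ0⟩ := eventually_atTop.1 (e1.and e2)
  set R := max ρ0 1 with hRdef
  have hR1 : 1 ≤ R := le_max_right _ _
  have hRpos : 0 < R := by linarith
  obtain ⟨M, hM⟩ := (isCompact_sphere (0 : Euc N) R).exists_bound_of_continuousOn hu.continuous.continuousOn
  set C := max M 0 / (R ^ 2) ^ s with hC
  have hRs : 0 < (R ^ 2) ^ s := by positivity
  have hC0 : 0 ≤ C := by positivity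
  refine ⟨R, C, hR1, hC0, fun x hx => le_of_forall_pos_le_add fun ε' hε' => ?_⟩
  obtain ⟨ε, hε, hεε⟩ : ∃ ε : ℝ, 0 < ε ∧ ε' = 2 * ε := ⟨ε' / 2, by linarith, by ring⟩
  have hne : ∀ x : Euc N, R ≤ ‖x‖ → x ≠ 0 := by
    intro x hx h0
    rw [h0, norm_zero] at hx; linarith
  have hsq : ∀ x : Euc N, R ≤ ‖x‖ → R ≤ ‖x‖ ^ 2 := by intro x hx; nlinarith
  have hp2 : ∀ x : Euc N, R ≤ ‖x‖ → (‖x‖ ^ 2) ^ s2 ≤ 1 := by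
    intro x hx
    exact Real.rpow_le_one_of_one_le_of_nonpos (hR1.trans (hsq x hx)) hs2.le
  have hWε : ∀ x : Euc N, ε ≤ (ε + ε * (‖x‖ ^ 2) ^ s2) + C * (‖x‖ ^ 2) ^ s := by
    intro x
    have h1 : 0 ≤ ε * (‖x‖ ^ 2) ^ s2 := by positivity
    have h2 : 0 ≤ C * (‖x‖ ^ 2) ^ s := by positivity
    linarith
  have key := compare (N := N) (u := u) (W := fun x => (ε + ε * (‖x‖ ^ 2) ^ s2) + C * (‖x‖ ^ 2) ^ s)
    (c := fun x => B * (‖x‖ ^ 2) ^ (-1 - a)) hRpos hu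
    (fun x hx => (contDiffAt_const.add (contDiffAt_const.mul (contDiffAt_pow s2 hx))).add
      (contDiffAt_const.mul (contDiffAt_pow s hx)))
    (fun x => hε.trans_le (hWε x)) (fun x hx => h x (hne x hx)) ?_ ?_ ?_ x hx
  · have := hp2 x hx
    nlinarith
  · intro x hx
    have hx0 := hne x hx
    have hl : lap N (fun x => (ε + ε * (‖x‖ ^ 2) ^ s2) + C * (‖x‖ ^ 2) ^ s) x
        = -(ε * κ2 * (‖x‖ ^ 2) ^ (s2 - 1)) - C * κ1 * (‖x‖ ^ 2) ^ (s - 1) := by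
      rw [lap_sub_const_mul (u := fun x => ε + ε * (‖x‖ ^ 2) ^ s2)
        (contDiffAt_const.add (contDiffAt_const.mul (contDiffAt_pow s2 hx0))) (contDiffAt_pow s hx0),
        lap_sub_const_mul (u := fun _ => ε) contDiffAt_const (contDiffAt_pow s2 hx0),
        lap_pow s hx0, lap_pow s2 hx0]
      have : lap N (fun _ => ε) x = 0 := by simp [lap]
      rw [this]; ring
    rw [hl]
    have hρ := hsq x hx
    obtain ⟨g1, g2⟩ := hρ0 (‖x‖ ^ 2) ((le_max_left _ _).trans hρ)
    have g3 := hp2 x hx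
    generalize ‖x‖ ^ 2 = ρ at *
    have hρp : 0 < ρ := by linarith
    have i1 : ρ ^ (-1 - a) * ρ ^ s = ρ ^ (s - 1) * ρ ^ (-a) := by
      rw [← Real.rpow_add hρp, ← Real.rpow_add hρp]; congr 1; ring
    have i2 : ρ ^ (-1 - a) = ρ ^ (s2 - 1) * ρ ^ (-(a + s2)) := by
      rw [← Real.rpow_add hρp]; congr 1; ring
    have p1 : 0 < ρ ^ (s - 1) := by positivity
    have p2 : 0 < ρ ^ (s2 - 1) := by positivity
    have p3 : 0 < ρ ^ (-1 - a) := by positivity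
    have j1 : C * (B * (ρ ^ (-1 - a) * ρ ^ s)) ≤ C * (κ1 * ρ ^ (s - 1)) := by
      rw [i1]
      refine mul_le_mul_of_nonneg_left ?_ hC0
      nlinarith
    have j2 : B * ρ ^ (-1 - a) * (1 + ρ ^ s2) < κ2 * ρ ^ (s2 - 1) := by
      have k1 : B * ρ ^ (-1 - a) * (1 + ρ ^ s2) ≤ B * ρ ^ (-1 - a) * 2 :=
        mul_le_mul_of_nonneg_left (by linarith) (by positivity)
      have k2 : B * ρ ^ (-1 - a) * 2 < κ2 * ρ ^ (s2 - 1) := by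
        rw [i2]; nlinarith
      linarith
    have j3 := mul_lt_mul_of_pos_left j2 hε
    linarith
  · intro x hx
    have h1 := hM x (by simpa using hx)
    have h2 : u x ≤ max M 0 := (le_abs_self _).trans (h1.trans (le_max_left _ _))
    have h3 : C * (‖x‖ ^ 2) ^ s = max M 0 := by
      rw [hx, hC, div_mul_cancel₀ _ hRs.ne']
    have h4 : 0 ≤ ε * (‖x‖ ^ 2) ^ s2 := by positivity
    linarith
  · have h1 : Tendsto (fun x => u x / ε) (cocompact (Euc N)) (𝓝 0) := by
      simpa using hdec.div_const ε
    refine squeeze_zero (fun x => ?_) (fun x => ?_) h1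
    · exact div_nonneg (hpos x).le (hε.le.trans (hWε x))
    · exact div_le_div_of_nonneg_left (hpos x).le hε (hWε x)

lemma weighted_integrable {N : ℕ} {u : Euc N → ℝ} (hu : Continuous u) (hpos : ∀ x, 0 < u x)
    {s R C : ℝ} (hR : 1 ≤ R) (hs0 : s < 0) (hs : (N : ℝ) < 2 - 4 * s)
    (h : ∀ x : Euc N, R ≤ ‖x‖ → u x ≤ C * (‖x‖ ^ 2) ^ s) :
    Integrable (fun x => u x ^ 2 / (1 + ‖x‖ ^ 2)) := by
  have hcont : Continuous (fun x : Euc N => u x ^ 2 / (1 + ‖x‖ ^ 2)) :=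
    (hu.pow 2).div (by fun_prop) (fun x => by positivity)
  have hint : Integrable (fun x : Euc N => (1 + ‖x‖ ^ 2) ^ (-(2 - 4 * s) / 2)) :=
    integrable_rpow_neg_one_add_norm_sq (by simpa using hs)
  refine hcont.locallyIntegrable.integrable_of_isBigO_cocompact (g := fun x : Euc N => (1 + ‖x‖ ^ 2) ^ (-(2 - 4 * s) / 2))
    ?_ (hint.integrableAtFilter _)
  refine Asymptotics.IsBigO.of_bound (C ^ 2 * (1/2) ^ (2 * s)) ?_
  have hn : Tendsto (fun x : Euc N => ‖x‖) (cocompact _) atTop := tendsto_norm_cocompact_atTop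
  filter_upwards [hn.eventually_ge_atTop R] with x hx
  rw [Real.norm_of_nonneg (by positivity), Real.norm_of_nonneg (by positivity)]
  have hu1 := h x hx
  have hu0 := hpos x
  have hρ : 1 ≤ ‖x‖ ^ 2 := by nlinarith
  generalize ‖x‖ ^ 2 = ρ at *
  have hq : 0 < 1 + ρ := by linarith
  have e : (1 + ρ) ^ (-(2 - 4 * s) / 2) = (1 + ρ) ^ (2 * s) / (1 + ρ) := by
    rw [show -(2 - 4 * s) / 2 = 2 * s - 1 by ring, Real.rpow_sub_one hq.ne']
  rw [e, ← mul_div_assoc]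
  refine div_le_div_of_nonneg_right ?_ hq.le
  have e2 : (ρ ^ s) ^ 2 = ρ ^ (2 * s) := by
    rw [← Real.rpow_natCast, ← Real.rpow_mul (by linarith)]; congr 1; push_cast; ring
  have e3 : ρ ^ (2 * s) ≤ (1/2) ^ (2 * s) * (1 + ρ) ^ (2 * s) := by
    rw [← Real.mul_rpow (by norm_num) hq.le]
    exact Real.rpow_le_rpow_of_nonpos (by linarith) (by linarith) (by linarith)
  calc u x ^ 2 ≤ (C * ρ ^ s) ^ 2 := by gcongr
    _ = C ^ 2 * ρ ^ (2 * s) := by rw [mul_pow, e2]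
    _ ≤ C ^ 2 * ((1/2) ^ (2 * s) * (1 + ρ) ^ (2 * s)) := by gcongr
    _ = _ := by ring

lemma energy {N : ℕ} {u G P : Euc N → ℝ} (hu : ContDiff ℝ 2 u) (hG : Continuous G)
    (hP : Continuous P) (hG0 : ∀ x, 0 ≤ G x) (hP0 : ∀ x, 0 ≤ P x) (hPi : Integrable P)
    (hQ : Integrable (fun x => u x ^ 2 / (1 + ‖x‖ ^ 2)))
    (hGP : ∀ x, G x - P x = ‖gradient u x‖ ^ 2 + u x * lap N u x) :
    Integrable G ∧ ∫ x, G x = ∫ x, P x := by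
  let φ : ContDiffBump (0 : Euc N) := ⟨1, 2, one_pos, one_lt_two⟩
  have hφ : ContDiff ℝ 2 (φ : Euc N → ℝ) := φ.contDiff
  have hφc : HasCompactSupport (φ : Euc N → ℝ) := φ.hasCompactSupport
  have hlc : HasCompactSupport (lap N φ) := by
    refine HasCompactSupport.intro hφc (fun x hx => ?_)
    rw [lap_eq]
    refine Finset.sum_eq_zero fun i _ => ?_
    have h1 : tsupport (pd N φ i) ⊆ tsupport φ := tsupport_fderiv_apply_subset ℝ _
    have h2 : tsupport (pd N (pd N φ i) i) ⊆ tsupport (pd N φ i) := tsupport_fderiv_apply_subset ℝ _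
    exact image_eq_zero_of_notMem_tsupport (fun h => hx (h1 (h2 h)))
  obtain ⟨K, hK⟩ : ∃ K, ∀ y : Euc N, ‖(1 + ‖y‖ ^ 2) * lap N φ y‖ ≤ K :=
    (HasCompactSupport.mul_left hlc).exists_bound_of_continuous
      ((by fun_prop : Continuous fun y : Euc N => 1 + ‖y‖ ^ 2).mul (continuous_lap hφ))
  have hK0 : 0 ≤ K := (norm_nonneg _).trans (hK 0)
  let c : ℕ → ℝ := fun n => 1 / ((n : ℝ) + 1)
  have hc0 : ∀ n, 0 < c n := fun n => Nat.one_div_pos_of_nat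
  have hc1 : ∀ n, c n ≤ 1 := fun n => by
    rw [div_le_one (by positivity)]; linarith [(Nat.cast_nonneg n : (0:ℝ) ≤ n)]
  have hct : Tendsto c atTop (𝓝 0) := tendsto_one_div_add_atTop_nhds_zero_nat
  let ψ : ℕ → Euc N → ℝ := fun n y => φ (c n • y)
  have hψ : ∀ n, ContDiff ℝ 2 (ψ n) := fun n => hφ.comp (contDiff_const_smul (c n))
  have hψc : ∀ n, HasCompactSupport (ψ n) := fun n =>
    hφc.comp_smul (hc0 n).ne'
  have hψ0 : ∀ n x, 0 ≤ ψ n x := fun n x => φ.nonneg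
  have hψ1 : ∀ n x, ψ n x ≤ 1 := fun n x => φ.le_one
  have hψt : ∀ x, Tendsto (fun n => ψ n x) atTop (𝓝 1) := by
    intro x
    have h1 : Tendsto (fun n => c n • x) atTop (𝓝 ((0:ℝ) • x)) := hct.smul_const x
    have h2 : φ ((0:ℝ) • x) = 1 := φ.one_of_mem_closedBall (by simp [φ])
    rw [← h2]
    exact (hφ.continuous.tendsto _).comp h1
  have hlap : ∀ n x, lap N (ψ n) x = c n ^ 2 * lap N φ (c n • x) := fun n x => lap_smul hφ (c n) x
  have hlb : ∀ n x, |lap N (ψ n) x| ≤ K / (1 + ‖x‖ ^ 2) := by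
    intro n x
    rw [hlap, le_div_iff₀ (by positivity)]
    have h1 := hK (c n • x)
    rw [norm_smul, Real.norm_of_nonneg (hc0 n).le, Real.norm_eq_abs, abs_mul,
      abs_of_nonneg (by positivity : (0:ℝ) ≤ 1 + (c n * ‖x‖) ^ 2)] at h1
    rw [abs_mul, abs_of_nonneg (by positivity : (0:ℝ) ≤ c n ^ 2)]
    refine le_trans ?_ h1
    have h2 : c n ^ 2 * (1 + ‖x‖ ^ 2) ≤ 1 + (c n * ‖x‖) ^ 2 := by
      have := hc1 n; have := hc0 n
      nlinarith
    have := mul_le_mul_of_nonneg_right h2 (abs_nonneg (lap N φ (c n • x)))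
    linarith
  have hlt : ∀ x, Tendsto (fun n => lap N (ψ n) x) atTop (𝓝 0) := by
    intro x
    have h1 : Tendsto (fun n => c n • x) atTop (𝓝 ((0:ℝ) • x)) := hct.smul_const x
    have h2 := (hct.pow 2).mul (((continuous_lap hφ).tendsto _).comp h1)
    simp only [hlap]
    simpa using h2
  have hub : ∀ n x, ‖u x ^ 2 * lap N (ψ n) x‖ ≤ K * (u x ^ 2 / (1 + ‖x‖ ^ 2)) := by
    intro n x
    rw [norm_mul, Real.norm_of_nonneg (sq_nonneg _), Real.norm_eq_abs]
    have := mul_le_mul_of_nonneg_left (hlb n x) (sq_nonneg (u x))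
    refine this.trans (le_of_eq ?_)
    ring
  have hcu : ∀ n, Continuous fun x => u x ^ 2 * lap N (ψ n) x := fun n =>
    (hu.continuous.pow 2).mul (continuous_lap (hψ n))
  have hGi : ∀ n, Integrable fun x => G x * ψ n x := fun n =>
    (hG.mul (hψ n).continuous).integrable_of_hasCompactSupport (hψc n).mul_left
  have hPψ : ∀ n, Integrable fun x => P x * ψ n x := fun n =>
    (hP.mul (hψ n).continuous).integrable_of_hasCompactSupport (hψc n).mul_left
  have hid : ∀ n, ∫ x, G x * ψ n x = (∫ x, P x * ψ n x) + (1/2) * ∫ x, u x ^ 2 * lap N (ψ n) x := by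
    intro n
    rw [← green (hu.pow 2) (hψ n) (hψc n)]
    have : ∀ x, lap N (fun y => u y ^ 2) x * ψ n x = 2 * (G x * ψ n x - P x * ψ n x) := by
      intro x
      rw [lap_sq hu, ← hGP]; ring
    simp only [this]
    rw [integral_const_mul, integral_sub (hGi n) (hPψ n)]
    ring
  have hKi : Integrable fun x => K * (u x ^ 2 / (1 + ‖x‖ ^ 2)) := hQ.const_mul K
  have t1 : Tendsto (fun n => ∫ x, u x ^ 2 * lap N (ψ n) x) atTop (𝓝 (∫ _ : Euc N, (0:ℝ))) := by
    refine tendsto_integral_of_dominated_convergence (fun x => K * (u x ^ 2 / (1 + ‖x‖ ^ 2)))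
      (fun n => (hcu n).aestronglyMeasurable) hKi
      (fun n => Eventually.of_forall (hub n)) (Eventually.of_forall fun x => ?_)
    simpa using (hlt x).const_mul (u x ^ 2)
  have dom : ∀ {H : Euc N → ℝ}, Continuous H → (∀ x, 0 ≤ H x) → Integrable H →
      Tendsto (fun n => ∫ x, H x * ψ n x) atTop (𝓝 (∫ x, H x)) := by
    intro H hH hH0 hHi
    refine tendsto_integral_of_dominated_convergence H
      (fun n => (hH.mul (hψ n).continuous).aestronglyMeasurable) hHi
      (fun n => Eventually.of_forall fun x => ?_) (Eventually.of_forall fun x => ?_)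
    · rw [Real.norm_of_nonneg (mul_nonneg (hH0 x) (hψ0 n x))]
      exact mul_le_of_le_one_right (hH0 x) (hψ1 n x)
    · simpa using (hψt x).const_mul (H x)
  have t2 := dom hP hP0 hPi
  have t3 : Tendsto (fun n => ∫ x, G x * ψ n x) atTop (𝓝 (∫ x, P x)) := by
    simp only [hid]
    have := t2.add (t1.const_mul (1/2))
    rwa [integral_zero, mul_zero, add_zero] at this
  have hGint : Integrable G := by
    have hcov : AECover (volume : Measure (Euc N)) atTop
        (fun n : ℕ => Metric.closedBall (0 : Euc N) ((n : ℝ) + 1)) :=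
      aecover_closedBall (tendsto_atTop_add_const_right _ _ tendsto_natCast_atTop_atTop)
    refine hcov.integrable_of_integral_bounded_of_nonneg_ae ((∫ x, P x) + 1)
      (fun n => hG.continuousOn.integrableOn_compact (isCompact_closedBall _ _))
      (Eventually.of_forall hG0) ?_
    filter_upwards [t3.eventually (gt_mem_nhds (lt_add_one _))] with n hn
    refine le_trans ?_ hn.le
    rw [← integral_indicator measurableSet_closedBall]
    refine integral_mono_of_nonneg
      (Eventually.of_forall fun x => indicator_nonneg (fun y _ => hG0 y) x) (hGi n)
      (Eventually.of_forall fun x => ?_)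
    by_cases hx : x ∈ Metric.closedBall (0 : Euc N) ((n : ℝ) + 1)
    · rw [indicator_of_mem hx]
      have : ψ n x = 1 := by
        refine φ.one_of_mem_closedBall ?_
        rw [mem_closedBall_zero_iff] at hx ⊢
        rw [norm_smul, Real.norm_of_nonneg (hc0 n).le]
        change 1 / ((n:ℝ) + 1) * ‖x‖ ≤ 1
        rw [one_div, inv_mul_le_iff₀ (by positivity)]
        linarith
      dsimp only
      rw [this, mul_one]
    · rw [indicator_of_notMem hx]
      exact mul_nonneg (hG0 x) (hψ0 n x)
  exact ⟨hGint, tendsto_nhds_unique (dom hG hG0 hGint) t3⟩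




/-- for any solution `u` of `(P_λ)`, both `∫ |∇u|²` and `∫ V u²` are finite and
`∫ |∇u|² < λ ∫ V u²`. -/
theorem stmt14 (N : ℕ) (hN : 3 ≤ N) (V V₁ V₂ : Euc N → ℝ)
    (hV : CondV N V V₁ V₂) (hdec : CondVDecay N V)
    (f : ℝ → ℝ) (hf : CondF N V f)
    (lam : ℝ) (hlam : 0 < lam)
    (u : Euc N → ℝ) (hu : IsSolution N V f lam u) :
    Integrable (fun x : Euc N => ‖gradient u x‖ ^ 2) ∧
    Integrable (fun x : Euc N => V x * u x ^ 2) ∧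
    (∫ x : Euc N, ‖gradient u x‖ ^ 2) < lam * ∫ x : Euc N, V x * u x ^ 2 := by
  obtain ⟨⟨Ch, β, hβ, -, hHol⟩, -⟩ := hV
  obtain ⟨A, α, hA, hα, hdec⟩ := hdec
  obtain ⟨hf1, hf0, -, -, -, hfm, -⟩ := hf
  have hN' : (3 : ℝ) ≤ N := by exact_mod_cast hN
  have hVc : Continuous V := hHol.continuous hβ
  have huc : Continuous u := hu.smooth.continuous
  have hfc : Continuous fun x => f (u x) := hf1.continuous.comp huc
  have hfp : ∀ t, 0 < t → 0 < f t := by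
    intro t ht
    have h1 := hfm (show t / 2 ∈ Ioi (0:ℝ) from half_pos ht) (show t ∈ Ioi (0:ℝ) from ht)
      (half_lt_self ht)
    have h2 : 0 ≤ f (t / 2) / (t / 2) := div_nonneg (hf0 _ (half_pos ht).le) (half_pos ht).le
    have h3 : 0 < f t / t := lt_of_le_of_lt h2 h1
    exact (div_pos_iff_of_pos_right ht).1 h3
  have hdec2 : ∀ x : Euc N, x ≠ 0 → max (V x) 0 ≤ A * (‖x‖ ^ 2) ^ (-1 - α / 2) := by
    intro x hx
    refine (hdec x hx).trans (le_of_eq ?_)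
    rw [← Real.rpow_natCast, ← Real.rpow_mul (norm_nonneg x)]
    congr 2; push_cast; ring
  have hsub : ∀ x : Euc N, x ≠ 0 → -lap N u x ≤ (lam * A) * (‖x‖ ^ 2) ^ (-1 - α / 2) * u x := by
    intro x hx
    rw [hu.eqn x]
    have h1 := (le_max_left (V x) 0).trans (hdec2 x hx)
    have h2 := hfp _ (hu.pos x)
    have h3 := mul_le_mul_of_nonneg_right h1 (hu.pos x).le
    have h4 : V x * u x - f (u x) ≤ A * (‖x‖ ^ 2) ^ (-1 - α / 2) * u x := by linarith
    have h5 := mul_le_mul_of_nonneg_left h4 hlam.le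
    linarith
  obtain ⟨R, C, hR, hC, hb⟩ := decay_bound hN hu.smooth hu.pos hu.decay (s := -(3 * ((N : ℝ) - 2) / 8))
    (mul_pos hlam hA) (half_pos hα) (by linarith) (by linarith) hsub
  have hQ := weighted_integrable huc hu.pos hR (by linarith) (by linarith) hb
  have hVp : Continuous fun x => max (V x) 0 := hVc.max continuous_const
  have hVm : Continuous fun x => max (-V x) 0 := hVc.neg.max continuous_const
  have hPi : Integrable fun x => max (V x) 0 * u x ^ 2 := by
    refine (hVp.mul (huc.pow 2)).locallyIntegrable.integrable_of_isBigO_cocompact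
      (g := fun x => u x ^ 2 / (1 + ‖x‖ ^ 2)) ?_ (hQ.integrableAtFilter _)
    refine Asymptotics.IsBigO.of_bound (2 * A) ?_
    have hn : Tendsto (fun x : Euc N => ‖x‖) (cocompact _) atTop := tendsto_norm_cocompact_atTop
    filter_upwards [hn.eventually_ge_atTop 1] with x hx
    change ‖max (V x) 0 * u x ^ 2‖ ≤ 2 * A * ‖u x ^ 2 / (1 + ‖x‖ ^ 2)‖
    rw [Real.norm_of_nonneg (mul_nonneg (le_max_right _ _) (sq_nonneg _)),
      Real.norm_of_nonneg (by positivity)]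
    have hx0 : x ≠ 0 := by
      intro h0; rw [h0, norm_zero] at hx; linarith
    have h1 := hdec2 x hx0
    have hρ : 1 ≤ ‖x‖ ^ 2 := by nlinarith
    generalize ‖x‖ ^ 2 = ρ at *
    have h2 : ρ ^ (-1 - α / 2) ≤ 2 / (1 + ρ) := by
      have h3 : ρ ^ (-1 - α / 2) ≤ ρ ^ (-1 : ℝ) :=
        Real.rpow_le_rpow_of_exponent_le hρ (by linarith)
      refine h3.trans ?_
      rw [Real.rpow_neg_one, inv_eq_one_div, div_le_div_iff₀ (by linarith) (by linarith)]
      linarith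
    calc max (V x) 0 * u x ^ 2 ≤ (A * (2 / (1 + ρ))) * u x ^ 2 := by
          gcongr
          exact h1.trans (mul_le_mul_of_nonneg_left h2 hA.le)
      _ = 2 * A * (u x ^ 2 / (1 + ρ)) := by ring
  have hgc : Continuous fun x => ‖gradient u x‖ ^ 2 := by
    simp only [norm_grad]
    refine continuous_finsetSum _ fun i _ => ?_
    exact (contDiff_pd (m := 1) hu.smooth (by norm_num) i).continuous.pow 2
  have hfu : ∀ x, 0 < lam * (f (u x) * u x) := fun x =>
    mul_pos hlam (mul_pos (hfp _ (hu.pos x)) (hu.pos x))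
  have hm0 : ∀ x, 0 ≤ lam * (max (-V x) 0 * u x ^ 2) := fun x => mul_nonneg hlam.le (mul_nonneg (le_max_right _ _) (sq_nonneg _))
  have hfuc : Continuous fun x => lam * (f (u x) * u x) := continuous_const.mul (hfc.mul huc)
  have hVmc : Continuous fun x => lam * (max (-V x) 0 * u x ^ 2) :=
    continuous_const.mul (hVm.mul (huc.pow 2))
  have hsplit : ∀ x, V x = max (V x) 0 - max (-V x) 0 := by
    intro x
    rcases le_total 0 (V x) with h | h
    · rw [max_eq_left h, max_eq_right (by linarith)]; ring
    · rw [max_eq_right h, max_eq_left (by linarith)]; ring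
  obtain ⟨hGi, hGe⟩ := energy (N := N) (u := u)
    (G := fun x => ‖gradient u x‖ ^ 2 + lam * (max (-V x) 0 * u x ^ 2) + lam * (f (u x) * u x))
    (P := fun x => lam * (max (V x) 0 * u x ^ 2)) hu.smooth ((hgc.add hVmc).add hfuc)
    (continuous_const.mul (hVp.mul (huc.pow 2)))
    (fun x => add_nonneg (add_nonneg (sq_nonneg _) (hm0 x)) (hfu x).le)
    (fun x => mul_nonneg hlam.le (mul_nonneg (le_max_right _ _) (sq_nonneg _))) (hPi.const_mul lam) hQ (by
      intro x
      have h1 := hu.eqn x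
      have h2 : lap N u x = -(lam * (V x * u x - f (u x))) := by linarith
      rw [h2]
      have h3 := hsplit x
      generalize max (V x) 0 = p at *
      generalize max (-V x) 0 = q at *
      rw [h3]; ring)
  have i1 : Integrable fun x => ‖gradient u x‖ ^ 2 :=
    hGi.mono' hgc.aestronglyMeasurable (Eventually.of_forall fun x => by
      rw [Real.norm_of_nonneg (sq_nonneg _)]
      linarith [hm0 x, hfu x])
  have i2 : Integrable fun x => lam * (max (-V x) 0 * u x ^ 2) :=
    hGi.mono' hVmc.aestronglyMeasurable (Eventually.of_forall fun x => by
      rw [Real.norm_of_nonneg (hm0 x)]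
      linarith [sq_nonneg ‖gradient u x‖, hfu x])
  have i3 : Integrable fun x => lam * (f (u x) * u x) :=
    hGi.mono' hfuc.aestronglyMeasurable (Eventually.of_forall fun x => by
      rw [Real.norm_of_nonneg (hfu x).le]
      linarith [sq_nonneg ‖gradient u x‖, hm0 x])
  have i4 : Integrable fun x => lam * (max (V x) 0 * u x ^ 2) := hPi.const_mul lam
  have hlV : (fun x => lam * (V x * u x ^ 2)) =
      fun x => lam * (max (V x) 0 * u x ^ 2) - lam * (max (-V x) 0 * u x ^ 2) := by
    ext x
    have h3 := hsplit x
    generalize max (V x) 0 = p at *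
    generalize max (-V x) 0 = q at *
    rw [h3]; ring
  have i5 : Integrable fun x => lam * (V x * u x ^ 2) := by
    rw [hlV]; exact i4.sub i2
  have i6 : Integrable fun x => V x * u x ^ 2 := by
    have := i5.const_mul lam⁻¹
    refine this.congr (Eventually.of_forall fun x => ?_)
    dsimp only
    rw [← mul_assoc, inv_mul_cancel₀ hlam.ne', one_mul]
  refine ⟨i1, i6, ?_⟩
  rw [← integral_const_mul, hlV, integral_sub i4 i2]
  have i12 : Integrable fun x => ‖gradient u x‖ ^ 2 + lam * (max (-V x) 0 * u x ^ 2) := i1.add i2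
  rw [integral_add i12 i3, integral_add i1 i2] at hGe
  have hpos : 0 < ∫ x, lam * (f (u x) * u x) :=
    integral_pos_of_integrable_nonneg_nonzero (x := (0 : Euc N)) hfuc i3 (fun x => (hfu x).le)
      (hfu 0).ne'
  linarith

end
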